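/- arXiv:2311.03608 — 11 statements merged into one kernel-verified Lean document; each statement's English description precedes it below -/
import Mathlib

section
/- In any HMS model, for every individual i ∈ I and any Υ ⊆ Ψ ⊆ Φ ⊆ At, if ω ∈ S_Φ and Π_i(ω) ⊆ S_Υ, then Π_i(ω_Ψ) = Π_i(ω). -/
/-!
Write `w = ω_Ψ` and let `S_X` be the space containing `Π(w)`. Projecting from `ω` to `w`
preserves ignorance, which gives `X ⊆ Υ`. Projecting from `w` to `ω_Υ` does too, and
`Π(ω_Υ) = Π(ω) ⊆ S_Υ` because projections preserve knowledge; this gives `Υ ⊆ X`. Hence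
`Π(w) ⊆ S_Υ`, so preservation of knowledge at `w` yields `Π(w) = Π(w_Υ) = Π(ω_Υ) = Π(ω)`.
-/

/-- The frame underlying HMS (Heifetz–Meier–Schipper) unawareness models: a complete
lattice of nonempty pairwise disjoint state spaces `S Φ` indexed by the subsets
`Φ ⊆ At` of atomic formulas (ordered by inclusion of the index), together with
commuting surjective projections `r Φ Ψ : S Φ → S Ψ` for `Ψ ⊆ Φ`. -/
structure HMSFrame (At : Type*) (Ω : Type*) where
  S : Set At → Set Ω
  S_nonempty : ∀ Φ : Set At, (S Φ).Nonempty
  S_disjoint : ∀ ⦃Φ Φ' : Set At⦄, Φ ≠ Φ' → Disjoint (S Φ) (S Φ')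
  S_cover : ∀ ω : Ω, ∃ Φ : Set At, ω ∈ S Φ
  r : Set At → Set At → Ω → Ω
  r_mem : ∀ ⦃Φ Ψ : Set At⦄, Ψ ⊆ Φ → ∀ ⦃ω : Ω⦄, ω ∈ S Φ → r Φ Ψ ω ∈ S Ψ
  r_surjOn : ∀ ⦃Φ Ψ : Set At⦄, Ψ ⊆ Φ → Set.SurjOn (r Φ Ψ) (S Φ) (S Ψ)
  r_id : ∀ (Φ : Set At), ∀ ω ∈ S Φ, r Φ Φ ω = ω
  r_comp : ∀ ⦃Φ Ψ Υ : Set At⦄, Υ ⊆ Ψ → Ψ ⊆ Φ → ∀ ω ∈ S Φ, r Ψ Υ (r Φ Ψ ω) = r Φ Υ ω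

variable {At Ω : Type*}

/-- `D^↑`, for a subset `D` of the space `S Φ`: all extensions of states in `D` to
(weakly) more expressive spaces. -/
def HMSFrame.up (F : HMSFrame At Ω) (Φ : Set At) (D : Set Ω) : Set Ω :=
  {ω : Ω | ∃ Ψ : Set At, Φ ⊆ Ψ ∧ ω ∈ F.S Ψ ∧ F.r Ψ Φ ω ∈ D}

/-- `E` is an event with base-space `S Φ` (and base some `D ⊆ S Φ`). -/
def HMSFrame.IsEvent (F : HMSFrame At Ω) (Φ : Set At) (E : Set Ω) : Prop :=
  ∃ D, D ⊆ F.S Φ ∧ E = F.up Φ D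

/-- Negation `¬E := (S Φ \ D)^↑` of an event `E` with base-space `S Φ`
(note `S Φ \ E = S Φ \ D` for an event `E` with base `D ⊆ S Φ`). -/
def HMSFrame.neg (F : HMSFrame At Ω) (Φ : Set At) (E : Set Ω) : Set Ω :=
  F.up Φ (F.S Φ \ E)

/-- Properties of the (explicit) possibility correspondence of HMS models:
nonemptiness, Confinement, Generalized Reflexivity, Stationarity,
Projections Preserve Ignorance, and Projections Preserve Knowledge. -/
structure IsPossibility (F : HMSFrame At Ω) (Pi : Ω → Set Ω) : Prop where
  nonempty : ∀ ω : Ω, (Pi ω).Nonempty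
  confinement : ∀ ⦃Φ : Set At⦄ ⦃ω : Ω⦄, ω ∈ F.S Φ → ∃ Ψ, Ψ ⊆ Φ ∧ Pi ω ⊆ F.S Ψ
  genRefl : ∀ ⦃Υ : Set At⦄ ⦃ω : Ω⦄, Pi ω ⊆ F.S Υ → ω ∈ F.up Υ (Pi ω)
  stationarity : ∀ ⦃ω ω' : Ω⦄, ω' ∈ Pi ω → Pi ω' = Pi ω
  projIgnorance : ∀ ⦃Φ Ψ : Set At⦄ ⦃ω : Ω⦄, ω ∈ F.S Φ → Ψ ⊆ Φ →
    ∀ ⦃Υ Υ' : Set At⦄, Pi ω ⊆ F.S Υ → Pi (F.r Φ Ψ ω) ⊆ F.S Υ' →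
      F.up Υ (Pi ω) ⊆ F.up Υ' (Pi (F.r Φ Ψ ω))
  projKnowledge : ∀ ⦃Φ Ψ Υ : Set At⦄ ⦃ω : Ω⦄, Υ ⊆ Ψ → Ψ ⊆ Φ → ω ∈ F.S Φ →
    Pi ω ⊆ F.S Ψ → F.r Ψ Υ '' Pi ω = Pi (F.r Φ Υ ω)

/-- Properties of an implicit possibility correspondence `La` relative to the
explicit possibility correspondence `Pi`: Reflexivity, Stationarity, Projections
Preserve Implicit Knowledge (whose statement `(Λ(ω))_Ψ = Λ(ω_Ψ)` presupposes that
the projection of `Λ(ω)` is defined, i.e. `Λ(ω) ⊆ S Φ` for `ω ∈ S Φ`),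
Explicit Measurability, and Implicit Measurability. -/
structure IsImplicit (F : HMSFrame At Ω) (Pi La : Ω → Set Ω) : Prop where
  refl : ∀ ω : Ω, ω ∈ La ω
  stationarity : ∀ ⦃ω ω' : Ω⦄, ω' ∈ La ω → La ω' = La ω
  projImplicit : ∀ ⦃Φ : Set At⦄ ⦃ω : Ω⦄, ω ∈ F.S Φ →
    La ω ⊆ F.S Φ ∧ ∀ ⦃Ψ : Set At⦄, Ψ ⊆ Φ → F.r Φ Ψ '' La ω = La (F.r Φ Ψ ω)
  explicitMeas : ∀ ⦃ω ω' : Ω⦄, ω' ∈ La ω → Pi ω' = Pi ω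
  implicitMeas : ∀ ⦃Φ Ψ : Set At⦄ ⦃ω ω' : Ω⦄, ω ∈ F.S Φ → Pi ω ⊆ F.S Ψ →
    ω' ∈ Pi ω → La ω' = F.r Φ Ψ '' La ω

/-- Properties of the primitive implicit possibility correspondence `La` of an
implicit knowledge-based HMS model: nonemptiness, Reflexivity, Stationarity, and
Projections Preserve Implicit Knowledge. -/
structure IsImplicitStar (F : HMSFrame At Ω) (La : Ω → Set Ω) : Prop where
  nonempty : ∀ ω : Ω, (La ω).Nonempty
  refl : ∀ ω : Ω, ω ∈ La ω
  stationarity : ∀ ⦃ω ω' : Ω⦄, ω' ∈ La ω → La ω' = La ω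
  projImplicit : ∀ ⦃Φ : Set At⦄ ⦃ω : Ω⦄, ω ∈ F.S Φ →
    La ω ⊆ F.S Φ ∧ ∀ ⦃Ψ : Set At⦄, Ψ ⊆ Φ → F.r Φ Ψ '' La ω = La (F.r Φ Ψ ω)

/-- Property (O) (Lack of Conception): the awareness level at `ω ∈ S Φ` (encoded
by its index `al ω ⊆ At`, so that the awareness level is the space `S (al ω)`)
is weakly less expressive than `S Φ`. -/
def PropO (F : HMSFrame At Ω) (al : Ω → Set At) : Prop :=
  ∀ ⦃Φ : Set At⦄ ⦃ω : Ω⦄, ω ∈ F.S Φ → al ω ⊆ Φ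

/-- Property (I) (Awareness Measurability). -/
def PropI (F : HMSFrame At Ω) (La : Ω → Set Ω) (al : Ω → Set At) : Prop :=
  ∀ ⦃ω ω' : Ω⦄, ω' ∈ La ω → al ω' = al ω

/-- Property (II): if `ω ∈ S Φ` and `S Ψ ⪯ α(ω)` then `α(ω_Ψ) = S Ψ`. -/
def PropII (F : HMSFrame At Ω) (al : Ω → Set At) : Prop :=
  ∀ ⦃Φ Ψ : Set At⦄ ⦃ω : Ω⦄, ω ∈ F.S Φ → Ψ ⊆ al ω → Ψ ⊆ Φ → al (F.r Φ Ψ ω) = Ψ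

/-- Property (III): if `ω ∈ S Φ` and `α(ω) ⪯ S Ψ ⪯ S Φ` then `α(ω_Ψ) = α(ω)`. -/
def PropIII (F : HMSFrame At Ω) (al : Ω → Set At) : Prop :=
  ∀ ⦃Φ Ψ : Set At⦄ ⦃ω : Ω⦄, ω ∈ F.S Φ → al ω ⊆ Ψ → Ψ ⊆ Φ → al (F.r Φ Ψ ω) = al ω

/-- Property (IV): if `ω ∈ S Φ` and `Ψ ⊆ Φ` then `α(ω) ⪰ α(ω_Ψ)`. -/
def PropIV (F : HMSFrame At Ω) (al : Ω → Set At) : Prop :=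
  ∀ ⦃Φ Ψ : Set At⦄ ⦃ω : Ω⦄, ω ∈ F.S Φ → Ψ ⊆ Φ → al (F.r Φ Ψ ω) ⊆ al ω

/-- `PiS` is the explicit possibility correspondence derived from the implicit
possibility correspondence `La` and the awareness function `al`:
`Π*(ω_Ψ) := (Λ*(ω))_{α(ω_Ψ)}` for all `ω ∈ S Φ` and `Ψ ⊆ Φ`. -/
def DerivedPi (F : HMSFrame At Ω) (La : Ω → Set Ω) (al : Ω → Set At)
    (PiS : Ω → Set Ω) : Prop :=
  ∀ ⦃Φ Ψ : Set At⦄ ⦃ω : Ω⦄, ω ∈ F.S Φ → Ψ ⊆ Φ →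
    PiS (F.r Φ Ψ ω) = F.r Φ (al (F.r Φ Ψ ω)) '' La ω

/-- The (explicit) knowledge operator `K(E) := {ω : Π(ω) ⊆ E}` (as a set this
agrees with the definition with default value `∅^{S(E)}` on the vacuous case). -/
def Kop (F : HMSFrame At Ω) (Pi : Ω → Set Ω) (E : Set Ω) : Set Ω :=
  {ω : Ω | Pi ω ⊆ E}

/-- The implicit knowledge operator `L(E) := {ω : Λ(ω) ⊆ E}`. -/
def Lop (F : HMSFrame At Ω) (La : Ω → Set Ω) (E : Set Ω) : Set Ω :=
  {ω : Ω | La ω ⊆ E}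

/-- The awareness operator `A(E) := {ω : S_{Π(ω)} ⪰ S(E)}`, applied to an event
with base-space `S Φ`. -/
def Aop (F : HMSFrame At Ω) (Pi : Ω → Set Ω) (Φ : Set At) : Set Ω :=
  {ω : Ω | ∃ Ψ : Set At, Φ ⊆ Ψ ∧ Pi ω ⊆ F.S Ψ}

/-- The unawareness operator `U(E) := ¬A(E)`, applied to an event with
base-space `S Φ` (recall `A(E)` is an `S(E)`-based event). -/
def Uop (F : HMSFrame At Ω) (Pi : Ω → Set Ω) (Φ : Set At) : Set Ω :=
  F.neg Φ (Aop F Pi Φ)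

/-- The awareness operator `A*(E) := {ω : α(ω) ⪰ S(E)}` defined from the
awareness function, applied to an event with base-space `S Φ`. -/
def AopStar (al : Ω → Set At) (Φ : Set At) : Set Ω :=
  {ω : Ω | Φ ⊆ al ω}

/-- An HMS model: the frame together with a possibility correspondence for each
individual and a valuation mapping each atomic formula to an event. -/
structure HMSModel (At Ω I : Type*) extends HMSFrame At Ω where
  Pi : I → Ω → Set Ω
  Pi_poss : ∀ i : I, IsPossibility toHMSFrame (Pi i)
  val : At → Set Ω
  val_event : ∀ p : At, ∃ Φ : Set At, toHMSFrame.IsEvent Φ (val p)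

/-- A complemented HMS model: an HMS model together with an implicit possibility
correspondence for each individual. -/
structure CompHMSModel (At Ω I : Type*) extends HMSModel At Ω I where
  La : I → Ω → Set Ω
  La_impl : ∀ i : I, IsImplicit toHMSModel.toHMSFrame (Pi i) (La i)

/-- An implicit knowledge-based HMS model: the frame together with, for each
individual, a primitive implicit possibility correspondence and an awareness
function satisfying (O)-(IV), and a valuation mapping atoms to events. -/
structure ImpHMSModel (At Ω I : Type*) extends HMSFrame At Ω where
  LaS : I → Ω → Set Ω
  LaS_impl : ∀ i : I, IsImplicitStar toHMSFrame (LaS i)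
  al : I → Ω → Set At
  al_O : ∀ i : I, PropO toHMSFrame (al i)
  al_I : ∀ i : I, PropI toHMSFrame (LaS i) (al i)
  al_II : ∀ i : I, PropII toHMSFrame (al i)
  al_III : ∀ i : I, PropIII toHMSFrame (al i)
  al_IV : ∀ i : I, PropIV toHMSFrame (al i)
  val : At → Set Ω
  val_event : ∀ p : At, ∃ Φ : Set At, toHMSFrame.IsEvent Φ (val p)

/-- Inclusion of upward closures reverses the order of the base-spaces: a point of `D` lies
in no space other than `S_Υ`, whereas points of the larger closure lie in spaces `S_Ψ` with
`X ⊆ Ψ`. -/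
lemma HMSFrame.subset_of_up_subset_up {At Ω : Type*} (F : HMSFrame At Ω) {Υ X : Set At}
    {D E : Set Ω} (hD : D ⊆ F.S Υ) (hne : D.Nonempty) (h : F.up Υ D ⊆ F.up X E) :
    X ⊆ Υ := by
  obtain ⟨x, hx⟩ := hne
  have hxup : x ∈ F.up Υ D := ⟨Υ, subset_rfl, hD hx, by rwa [F.r_id Υ x (hD hx)]⟩
  obtain ⟨Ψ, hXΨ, hxΨ, -⟩ := h hxup
  have hΨ : Ψ = Υ := by
    by_contra hne
    exact Set.disjoint_left.mp (F.S_disjoint hne) hxΨ (hD hx)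
  exact hΨ ▸ hXΨ

/-- Projecting a state to the space of its own possibility set leaves that set unchanged:
the case of Projections Preserve Knowledge in which the possibility set is projected by the
identity. -/
lemma IsPossibility.eq_proj {At Ω : Type*} {F : HMSFrame At Ω} {Pi : Ω → Set Ω}
    (hP : IsPossibility F Pi) {Φ Υ : Set At} {ω : Ω} (hΥΦ : Υ ⊆ Φ) (hω : ω ∈ F.S Φ)
    (h : Pi ω ⊆ F.S Υ) : Pi (F.r Φ Υ ω) = Pi ω := by
  have hid : F.r Υ Υ '' Pi ω = Pi ω :=
    (Set.image_congr fun x hx => F.r_id Υ x (h hx)).trans (Set.image_id' _)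
  rw [← hP.projKnowledge subset_rfl hΥΦ hω h, hid]

/-- In any HMS model, for every individual `i ∈ I` and any
`Υ ⊆ Ψ ⊆ Φ ⊆ At`, if `ω ∈ S_Φ` and `Π_i(ω) ⊆ S_Υ`, then `Π_i(ω_Ψ) = Π_i(ω)`. -/
theorem possibility_at_comparable_projections_equal
    {At Ω I : Type*} [Nonempty At] [Nonempty I]
    (M : HMSModel At Ω I) (i : I) (Φ Ψ Υ : Set At)
    (hΥΨ : Υ ⊆ Ψ) (hΨΦ : Ψ ⊆ Φ) (ω : Ω) (hω : ω ∈ M.S Φ)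
    (hPiw : M.Pi i ω ⊆ M.S Υ) :
    M.Pi i (M.r Φ Ψ ω) = M.Pi i ω := by
  have hP := M.Pi_poss i
  have hw : M.r Φ Ψ ω ∈ M.S Ψ := M.r_mem hΨΦ hω
  have hcomp : M.r Ψ Υ (M.r Φ Ψ ω) = M.r Φ Υ ω := M.r_comp hΥΨ hΨΦ ω hω
  have hωΥ : M.Pi i (M.r Ψ Υ (M.r Φ Ψ ω)) = M.Pi i ω := by
    rw [hcomp]
    exact hP.eq_proj (hΥΨ.trans hΨΦ) hω hPiw
  obtain ⟨X, -, hX⟩ := hP.confinement hw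
  have hXΥ : X ⊆ Υ :=
    M.subset_of_up_subset_up hPiw (hP.nonempty ω) (hP.projIgnorance hω hΨΦ hPiw hX)
  have hΥX : Υ ⊆ X :=
    M.subset_of_up_subset_up hX (hP.nonempty _)
      (hP.projIgnorance hw hΥΨ hX (by rwa [hωΥ]))
  obtain rfl : X = Υ := hXΥ.antisymm hΥX
  exact (hP.eq_proj hΥΨ hw hX).symm.trans hωΥ
end

section
/- Projections preserve implicit ignorance: for any individual i ∈ I, if the implicit possibility correspondence Λ_i satisfies Strong Confinement (for every ω ∈ S_Φ, Λ_i(ω) ⊆ S_Φ) and Projections Preserve Implicit Knowledge, then for all Φ ⊆ At, if ω ∈ S_Φ then Λ_i^↑(ω) ⊆ Λ_i^↑(ω_Ψ) for all Ψ ⊆ Φ, where Λ_i^↑(ω) := (Λ_i(ω))^↑. -/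
variable {At Ω : Type*}

/-- Projections preserve implicit ignorance: for any individual `i`,
if `Λ_i` satisfies Strong Confinement and Projections Preserve Implicit Knowledge,
then for all `Φ ⊆ At`, if `ω ∈ S_Φ` then `Λ_i^↑(ω) ⊆ Λ_i^↑(ω_Ψ)` for all `Ψ ⊆ Φ`. -/
theorem projections_preserve_implicit_ignorance
    {At Ω I : Type*} [Nonempty At] [Nonempty I]
    (F : HMSFrame At Ω) (La : I → Ω → Set Ω) (i : I)
    (hconf : ∀ ⦃Φ : Set At⦄ ⦃ω : Ω⦄, ω ∈ F.S Φ → La i ω ⊆ F.S Φ)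
    (hppik : ∀ ⦃Φ Ψ : Set At⦄ ⦃ω : Ω⦄, ω ∈ F.S Φ → Ψ ⊆ Φ →
      F.r Φ Ψ '' La i ω = La i (F.r Φ Ψ ω)) :
    ∀ ⦃Φ Ψ : Set At⦄ ⦃ω : Ω⦄, ω ∈ F.S Φ → Ψ ⊆ Φ →
      F.up Φ (La i ω) ⊆ F.up Ψ (La i (F.r Φ Ψ ω)) := by
  rintro Φ Ψ ω hω hΨΦ x ⟨Υ, hΦΥ, hx, hxLa⟩
  refine ⟨Υ, hΨΦ.trans hΦΥ, hx, ?_⟩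
  -- Projections commute, so `x_Ψ = (x_Φ)_Ψ` lies in `(Λ_i(ω))_Ψ = Λ_i(ω_Ψ)`.
  rw [← hppik hω hΨΦ, ← F.r_comp hΨΦ hΦΥ x hx]
  exact Set.mem_image_of_mem _ hxLa
end

section
/- In any complemented HMS model, for every individual i ∈ I and all states ω, ω' ∈ Ω: if ω' ∈ Π_i(ω), then Λ_i(ω') = Π_i(ω'). -/
variable {At Ω : Type*}

/-- In any complemented HMS model, for every individual `i ∈ I` and
all states `ω, ω' ∈ Ω`: if `ω' ∈ Π_i(ω)`, then `Λ_i(ω') = Π_i(ω')`. -/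
theorem implicit_eq_explicit_on_possibility_set
    {At Ω I : Type*} [Nonempty At] [Nonempty I]
    (M : CompHMSModel At Ω I) (i : I) (ω ω' : Ω) (h : ω' ∈ M.Pi i ω) :
    M.La i ω' = M.Pi i ω' := by
  obtain ⟨Φ, hΦ⟩ := M.S_cover ω
  obtain ⟨Ψ, -, hΨ⟩ := (M.Pi_poss i).confinement hΦ
  have hPi : M.Pi i ω' = M.Pi i ω := (M.Pi_poss i).stationarity h
  ext x
  constructor
  · intro hx
    have hxΨ : x ∈ M.S Ψ := ((M.La_impl i).projImplicit (hΨ h)).1 hx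
    have hPix : M.Pi i x = M.Pi i ω' := (M.La_impl i).explicitMeas hx
    obtain ⟨Υ, -, hxΥ, hr⟩ := (M.Pi_poss i).genRefl (Υ := Ψ) (ω := x)
      (by rw [hPix, hPi]; exact hΨ)
    -- `x` already lies in the space containing `Π(x)`, so the projection there fixes it.
    obtain rfl : Υ = Ψ := by
      by_contra hne
      exact Set.disjoint_left.mp (M.S_disjoint hne) hxΥ hxΨ
    rwa [M.r_id _ x hxΥ, hPix] at hr
  · intro hx
    rw [hPi] at hx
    -- Both `Λ(x)` and `Λ(ω')` are the projection of `Λ(ω)` to the space containing `Π(ω)`.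
    have hLa : M.La i x = M.La i ω' :=
      ((M.La_impl i).implicitMeas hΦ hΨ hx).trans ((M.La_impl i).implicitMeas hΦ hΨ h).symm
    exact hLa ▸ (M.La_impl i).refl x
end

section
/- Coherence: in any complemented HMS model, for every individual i ∈ I and every ω ∈ Ω, the projection of the implicit possibility set to the space of the explicit possibility set equals the explicit possibility set, i.e., (Λ_i(ω))_{S_{Π_i(ω)}} = Π_i(ω). -/
variable {At Ω : Type*}

/-- Coherence: in any complemented HMS model, for every individual
`i ∈ I` and every `ω ∈ Ω`, the projection of the implicit possibility set to the
space of the explicit possibility set equals the explicit possibility set: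
`(Λ_i(ω))_{S_{Π_i(ω)}} = Π_i(ω)`. -/
theorem coherence
    {At Ω I : Type*} [Nonempty At] [Nonempty I]
    (M : CompHMSModel At Ω I) (i : I) (Φ Ψ : Set At) (ω : Ω)
    (hω : ω ∈ M.S Φ) (hPiw : M.Pi i ω ⊆ M.S Ψ) :
    M.r Φ Ψ '' M.La i ω = M.Pi i ω := by
  have hPi := M.Pi_poss i
  have hLa := M.La_impl i
  apply Set.Subset.antisymm
  · rintro _ ⟨x, hx, rfl⟩
    -- Explicit Measurability lets Generalized Reflexivity at `x` speak about `Π_i(ω)`.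
    have hPix : M.Pi i x = M.Pi i ω := hLa.explicitMeas hx
    obtain ⟨Φ', -, hxΦ', hr⟩ := hPi.genRefl (hPix ▸ hPiw : M.Pi i x ⊆ M.S Ψ)
    have hxΦ : x ∈ M.S Φ := (hLa.projImplicit hω).1 hx
    -- The space containing `x` is unique, so the projection there starts from `S Φ`.
    obtain rfl : Φ' = Φ := by
      by_contra hne
      exact Set.disjoint_left.mp (M.S_disjoint hne) hxΦ' hxΦ
    exact hPix ▸ hr
  · intro ω' hω'
    rw [← hLa.implicitMeas hω hPiw hω']
    exact hLa.refl ω'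
end

section
/- In any complemented HMS model, for every individual i ∈ I and every event E, the set L_i(E) is an S(E)-based event, i.e., L_i(E) = D^↑ for some D ⊆ S(E). -/
variable {At Ω : Type*}

/-- In any complemented HMS model, for every individual `i ∈ I` and
every event `E`, the set `L_i(E)` is an `S(E)`-based event, i.e. `L_i(E) = D^↑`
for some `D ⊆ S(E)`. -/
theorem implicit_knowledge_is_based_event
    {At Ω I : Type*} [Nonempty At] [Nonempty I]
    (M : CompHMSModel At Ω I) (i : I) (Φ : Set At) (E : Set Ω)
    (hE : M.toHMSFrame.IsEvent Φ E) :
    M.toHMSFrame.IsEvent Φ (Lop M.toHMSFrame (M.La i) E) := by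
  obtain ⟨D, -, rfl⟩ := hE
  have hLa := M.La_impl i
  refine ⟨{ω | ω ∈ M.S Φ ∧ M.La i ω ⊆ D}, fun ω h => h.1, ?_⟩
  ext ω
  constructor
  · intro h
    obtain ⟨Ψ, hΦΨ, hω, -⟩ := h (hLa.refl ω)
    obtain ⟨hsub, hproj⟩ := hLa.projImplicit hω
    refine ⟨Ψ, hΦΨ, hω, M.r_mem hΦΨ hω, ?_⟩
    rw [← hproj hΦΨ]
    rintro _ ⟨υ, hυ, rfl⟩
    obtain ⟨Υ, -, hυΥ, hr⟩ := h hυ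
    -- `υ` lies in both `S Ψ` and `S Υ`, so disjointness of the spaces identifies the indices.
    obtain rfl : Υ = Ψ := by
      by_contra hne
      exact Set.disjoint_left.mp (M.S_disjoint hne) hυΥ (hsub hυ)
    exact hr
  · rintro ⟨Ψ, hΦΨ, hω, -, hLD⟩ υ hυ
    obtain ⟨hsub, hproj⟩ := hLa.projImplicit hω
    rw [← hproj hΦΨ] at hLD
    exact ⟨Ψ, hΦΨ, hsub hυ, hLD ⟨υ, hυ, rfl⟩⟩
end

section
/- In any complemented HMS model, for every individual i ∈ I, the implicit knowledge operator L_i satisfies, for all events E, F and every family of events {E_n}_n: (i) Necessitation: L_i(S_Φ^↑) = S_Φ^↑ for every Φ ⊆ At; (ii) Conjunction: L_i(⋂_n E_n) = ⋂_n L_i(E_n); (iii) Monotonicity: E ⊆ F implies L_i(E) ⊆ L_i(F); (iv) Truth: L_i(E) ⊆ E; (v) Positive Introspection: L_i(E) ⊆ L_i(L_i(E)); (vi) Negative Introspection: ¬L_i(E) ⊆ L_i(¬L_i(E)). -/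
variable {At Ω : Type*}

/-- In any complemented HMS model, for every individual `i ∈ I`, the
implicit knowledge operator `L_i` satisfies (i) Necessitation, (ii) Conjunction,
(iii) Monotonicity, (iv) Truth, (v) Positive Introspection, and
(vi) Negative Introspection. -/
theorem implicit_knowledge_S5
    {At Ω I : Type*} [Nonempty At] [Nonempty I]
    (M : CompHMSModel At Ω I) (i : I) :
    -- (i) Necessitation: `L_i(S_Φ^↑) = S_Φ^↑`
    (∀ Φ : Set At,
      Lop M.toHMSFrame (M.La i) (M.toHMSFrame.up Φ (M.S Φ)) =
        M.toHMSFrame.up Φ (M.S Φ)) ∧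
    -- (ii) Conjunction: `L_i(⋂ₙ Eₙ) = ⋂ₙ L_i(Eₙ)`
    (∀ (ι : Type) [Nonempty ι] (Φ : ι → Set At) (E : ι → Set Ω),
      (∀ n : ι, M.toHMSFrame.IsEvent (Φ n) (E n)) →
      Lop M.toHMSFrame (M.La i) (⋂ n : ι, E n) =
        ⋂ n : ι, Lop M.toHMSFrame (M.La i) (E n)) ∧
    -- (iii) Monotonicity: `E ⊆ F` implies `L_i(E) ⊆ L_i(F)`
    (∀ (Φ Φ' : Set At) (E E' : Set Ω), M.toHMSFrame.IsEvent Φ E →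
      M.toHMSFrame.IsEvent Φ' E' → E ⊆ E' →
      Lop M.toHMSFrame (M.La i) E ⊆ Lop M.toHMSFrame (M.La i) E') ∧
    -- (iv) Truth: `L_i(E) ⊆ E`
    (∀ (Φ : Set At) (E : Set Ω), M.toHMSFrame.IsEvent Φ E →
      Lop M.toHMSFrame (M.La i) E ⊆ E) ∧
    -- (v) Positive Introspection: `L_i(E) ⊆ L_i(L_i(E))`
    (∀ (Φ : Set At) (E : Set Ω), M.toHMSFrame.IsEvent Φ E →
      Lop M.toHMSFrame (M.La i) E ⊆
        Lop M.toHMSFrame (M.La i) (Lop M.toHMSFrame (M.La i) E)) ∧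
    -- (vi) Negative Introspection: `¬L_i(E) ⊆ L_i(¬L_i(E))`
    (∀ (Φ : Set At) (E : Set Ω), M.toHMSFrame.IsEvent Φ E →
      M.toHMSFrame.neg Φ (Lop M.toHMSFrame (M.La i) E) ⊆
        Lop M.toHMSFrame (M.La i)
          (M.toHMSFrame.neg Φ (Lop M.toHMSFrame (M.La i) E))) := by
  have h := M.La_impl i
  refine ⟨fun Φ => ?_, fun ι _ Φ E _ => ?_, fun Φ Φ' E E' _ _ hE ω hω => hω.trans hE,
    fun Φ E _ ω hω => hω (h.refl ω), fun Φ E _ ω hω ω' hω' => ?_, fun Φ E _ ω hω ω' hω' => ?_⟩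
  · ext ω
    refine ⟨fun hω => hω (h.refl ω), ?_⟩
    rintro ⟨Ψ, hΦΨ, hωΨ, -⟩ ω' hω'
    have hω'Ψ := (h.projImplicit hωΨ).1 hω'
    exact ⟨Ψ, hΦΨ, hω'Ψ, M.r_mem hΦΨ hω'Ψ⟩
  · ext ω
    simp only [Lop, Set.mem_ofPred_eq, Set.mem_iInter, Set.subset_iInter_iff]
  · exact (h.stationarity hω').subset.trans hω
  · obtain ⟨Ψ, hΦΨ, hωΨ, -, hnot⟩ := hω
    obtain ⟨hsub, hproj⟩ := h.projImplicit hωΨ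
    -- `ω'_Φ ∈ (Λ(ω))_Φ = Λ(ω_Φ)`, so `Λ(ω'_Φ) = Λ(ω_Φ)`, which is not contained in `E`.
    have hmem : M.r Ψ Φ ω' ∈ M.La i (M.r Ψ Φ ω) :=
      hproj hΦΨ ▸ Set.mem_image_of_mem (M.r Ψ Φ) hω'
    have hω'Ψ := hsub hω'
    exact ⟨Ψ, hΦΨ, hω'Ψ, M.r_mem hΦΨ hω'Ψ,
      fun hE => hnot ((h.stationarity hmem).symm.subset.trans hE)⟩
end

section
/- In any complemented HMS model, for every individual i ∈ I and every event E, explicit knowledge equals implicit knowledge plus awareness: K_i(E) = L_i(E) ∩ A_i(E). -/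
variable {At Ω : Type*}

theorem HMSFrame.index_unique (F : HMSFrame At Ω) {Φ Ψ : Set At} {ω : Ω}
    (h₁ : ω ∈ F.S Φ) (h₂ : ω ∈ F.S Ψ) : Φ = Ψ := by
  by_contra h
  exact Set.disjoint_left.mp (F.S_disjoint h) h₁ h₂

theorem HMSFrame.mem_up_iff (F : HMSFrame At Ω) {Φ Ψ : Set At} {D : Set Ω} {ω : Ω}
    (hω : ω ∈ F.S Ψ) : ω ∈ F.up Φ D ↔ Φ ⊆ Ψ ∧ F.r Ψ Φ ω ∈ D := by
  constructor
  · rintro ⟨Ψ', hΦ, hω', hr⟩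
    obtain rfl := F.index_unique hω hω'
    exact ⟨hΦ, hr⟩
  · rintro ⟨hΦ, hr⟩
    exact ⟨Ψ, hΦ, hω, hr⟩

/-- Membership in an event based in `S Φ` is unaffected by projecting to a space that is still at
least as expressive as `S Φ`. -/
theorem HMSFrame.r_mem_up_iff (F : HMSFrame At Ω) {Φ Ψ Ψ' : Set At} {D : Set Ω} {ω : Ω}
    (hω : ω ∈ F.S Ψ') (hΦ : Φ ⊆ Ψ) (hΨ : Ψ ⊆ Ψ') :
    F.r Ψ' Ψ ω ∈ F.up Φ D ↔ ω ∈ F.up Φ D := by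
  rw [F.mem_up_iff (F.r_mem hΨ hω), F.mem_up_iff hω, F.r_comp hΦ hΨ ω hω]
  exact ⟨fun h => ⟨hΦ.trans hΨ, h.2⟩, fun h => ⟨hΦ, h.2⟩⟩

/-- Explicit possibility is implicit possibility projected to the awareness space:
`Π(ω) = (Λ(ω))_{S_{Π(ω)}}`. -/
theorem HMSFrame.pi_eq_image_la (F : HMSFrame At Ω) {Pi La : Ω → Set Ω}
    (hPi : IsPossibility F Pi) (hLa : IsImplicit F Pi La) {Φ Ψ : Set At} {ω : Ω}
    (hω : ω ∈ F.S Φ) (hΨ : Pi ω ⊆ F.S Ψ) : Pi ω = F.r Φ Ψ '' La ω := by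
  apply Set.Subset.antisymm
  · intro ω' hω'
    rw [← hLa.implicitMeas hω hΨ hω']
    exact hLa.refl ω'
  · rintro _ ⟨ω', hω', rfl⟩
    have hPi' := hLa.explicitMeas hω'
    have hup := hPi.genRefl (hPi'.trans_subset hΨ)
    rw [hPi'] at hup
    exact ((F.mem_up_iff ((hLa.projImplicit hω).1 hω')).mp hup).2

/-- In any complemented HMS model, for every individual `i ∈ I` and
every event `E`, explicit knowledge equals implicit knowledge plus awareness:
`K_i(E) = L_i(E) ∩ A_i(E)`. -/
theorem explicit_eq_implicit_inter_awareness
    {At Ω I : Type*} [Nonempty At] [Nonempty I]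
    (M : CompHMSModel At Ω I) (i : I) (Φ : Set At) (E : Set Ω)
    (hE : M.toHMSFrame.IsEvent Φ E) :
    Kop M.toHMSFrame (M.Pi i) E =
      Lop M.toHMSFrame (M.La i) E ∩ Aop M.toHMSFrame (M.Pi i) Φ := by
  obtain ⟨D, -, rfl⟩ := hE
  have hPi := M.Pi_poss i
  have hLa := M.La_impl i
  ext ω
  obtain ⟨Φ₀, hω⟩ := M.S_cover ω
  obtain ⟨Ψ, hΨΦ₀, hΨ⟩ := hPi.confinement hω
  obtain ⟨x, hx⟩ := hPi.nonempty ω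
  have haware : ω ∈ Aop M.toHMSFrame (M.Pi i) Φ ↔ Φ ⊆ Ψ := by
    constructor
    · rintro ⟨Ψ', hΦ, hΨ'⟩
      obtain rfl := M.index_unique (hΨ hx) (hΨ' hx)
      exact hΦ
    · exact fun hΦ => ⟨Ψ, hΦ, hΨ⟩
  have hequiv (hΦ : Φ ⊆ Ψ) : M.Pi i ω ⊆ M.up Φ D ↔ M.La i ω ⊆ M.up Φ D := by
    rw [M.pi_eq_image_la hPi hLa hω hΨ, Set.image_subset_iff]
    exact forall₂_congr fun ω' hω' =>
      M.r_mem_up_iff ((hLa.projImplicit hω).1 hω') hΦ hΨΦ₀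
  rw [Set.mem_inter_iff, haware]
  constructor
  · intro hK
    have hΦ : Φ ⊆ Ψ := ((M.mem_up_iff (hΨ hx)).mp (hK hx)).1
    exact ⟨(hequiv hΦ).mp hK, hΦ⟩
  · rintro ⟨hL, hΦ⟩
    exact (hequiv hΦ).mpr hL
end

section
/- In any complemented HMS model, for every individual i ∈ I and every event E, the individual implicitly knows her unawareness: U_i(E) = L_i(U_i(E)). -/
variable {At Ω : Type*}

/-- In any complemented HMS model, for every individual `i ∈ I` and
every event `E`, the individual implicitly knows her unawareness:
`U_i(E) = L_i(U_i(E))`. -/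
theorem implicitly_knows_unawareness
    {At Ω I : Type*} [Nonempty At] [Nonempty I]
    (M : CompHMSModel At Ω I) (i : I) (Φ : Set At) (E : Set Ω)
    (hE : M.toHMSFrame.IsEvent Φ E) :
    Uop M.toHMSFrame (M.Pi i) Φ =
      Lop M.toHMSFrame (M.La i) (Uop M.toHMSFrame (M.Pi i) Φ) := by
  apply Set.Subset.antisymm
  · rintro ω ⟨Ψ, hΦΨ, hωΨ, hωΦ, hA⟩ ω' hω'
    obtain ⟨hLa, hproj⟩ := (M.La_impl i).projImplicit hωΨ
    refine ⟨Ψ, hΦΨ, hLa hω', M.r_mem hΦΨ (hLa hω'), ?_⟩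
    -- Projections preserve implicit knowledge, so `ω'_Φ ∈ Λ_i(ω_Φ)`; by explicit
    -- measurability the awareness levels at `ω'_Φ` and `ω_Φ` coincide.
    have hmem : M.r Ψ Φ ω' ∈ M.La i (M.r Ψ Φ ω) := hproj hΦΨ ▸ Set.mem_image_of_mem _ hω'
    have hPi := (M.La_impl i).explicitMeas hmem
    rintro ⟨Υ, hΦΥ, hsub⟩
    exact hA ⟨Υ, hΦΥ, hPi ▸ hsub⟩
  · exact fun ω hω => hω ((M.La_impl i).refl ω)
end

section
/- In any implicit knowledge-based HMS model, for every individual i ∈ I, if α_i satisfies properties (O), (II), and (III), then Reflexivity of Λ*_i implies that the derived explicit possibility correspondence Π*_i satisfies Generalized Reflexivity: ω ∈ (Π*_i(ω))^↑ for every ω ∈ Ω. -/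
variable {At Ω : Type*}

/-- In any implicit knowledge-based HMS model, for every individual
`i ∈ I`, if `α_i` satisfies properties (O), (II), and (III), then Reflexivity of
`Λ*_i` implies that the derived explicit possibility correspondence `Π*_i`
satisfies Generalized Reflexivity: `ω ∈ (Π*_i(ω))^↑` for every `ω ∈ Ω`. -/
theorem derived_pi_generalized_reflexivity
    {At Ω I : Type*} [Nonempty At] [Nonempty I]
    (F : HMSFrame At Ω) (La : I → Ω → Set Ω) (al : I → Ω → Set At)
    (PiS : I → Ω → Set Ω) (i : I)
    (hLa : IsImplicitStar F (La i))
    (hPiS : DerivedPi F (La i) (al i) (PiS i))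
    (hO : PropO F (al i)) (hII : PropII F (al i)) (hIII : PropIII F (al i)) :
    ∀ ⦃Υ : Set At⦄ ⦃ω : Ω⦄, PiS i ω ⊆ F.S Υ → ω ∈ F.up Υ (PiS i ω) := by
  intro Υ ω hΥ
  obtain ⟨Φ, hω⟩ := F.S_cover ω
  have hal : al i ω ⊆ Φ := hO hω
  -- The defining equation of `Π*` at the trivial projection `ω = ω_Φ`.
  have hPi : PiS i ω = F.r Φ (al i ω) '' La i ω := by
    simpa only [F.r_id Φ ω hω] using hPiS hω subset_rfl
  have hmem : F.r Φ (al i ω) ω ∈ PiS i ω := hPi ▸ ⟨ω, hLa.refl ω, rfl⟩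
  -- Disjointness of the state spaces forces the base space of `Π*(ω)` to be `α(ω)`.
  have hΥal : Υ = al i ω := by
    by_contra hne
    exact Set.disjoint_left.1 (F.S_disjoint hne) (hΥ hmem) (F.r_mem hal hω)
  subst hΥal
  exact ⟨Φ, hal, hω, hmem⟩
end

section
/- In any implicit knowledge-based HMS model, for every individual i ∈ I, if α_i satisfies properties (II) and (III), then the derived explicit possibility correspondence Π*_i satisfies Projections Preserve Knowledge: if Υ ⊆ Ψ ⊆ Φ ⊆ At, ω ∈ S_Φ and Π*_i(ω) ⊆ S_Ψ, then (Π*_i(ω))_Υ = Π*_i(ω_Υ). -/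
variable {At Ω : Type*}

/-- In any implicit knowledge-based HMS model, for every individual
`i ∈ I`, if `α_i` satisfies properties (II) and (III), then the derived explicit
possibility correspondence `Π*_i` satisfies Projections Preserve Knowledge: if
`Υ ⊆ Ψ ⊆ Φ ⊆ At`, `ω ∈ S_Φ` and `Π*_i(ω) ⊆ S_Ψ`, then
`(Π*_i(ω))_Υ = Π*_i(ω_Υ)`. -/
theorem derived_pi_projections_preserve_knowledge
    {At Ω I : Type*} [Nonempty At] [Nonempty I]
    (F : HMSFrame At Ω) (La : I → Ω → Set Ω) (al : I → Ω → Set At)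
    (PiS : I → Ω → Set Ω) (i : I)
    (hLa : IsImplicitStar F (La i))
    (hPiS : DerivedPi F (La i) (al i) (PiS i))
    (hII : PropII F (al i)) (hIII : PropIII F (al i)) :
    ∀ ⦃Φ Ψ Υ : Set At⦄ ⦃ω : Ω⦄, Υ ⊆ Ψ → Ψ ⊆ Φ → ω ∈ F.S Φ →
      PiS i ω ⊆ F.S Ψ → F.r Ψ Υ '' PiS i ω = PiS i (F.r Φ Υ ω) := by
  intro Φ Ψ Υ ω hΥΨ hΨΦ hω hPi
  have hal : al i ω = Ψ := by
    -- As `al i ω ⊆ Φ` is not known yet, `Π*(ω)` is computed from a lift of `ω` to the top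
    -- space `S At`, whose projection to the awareness level `al i ω` is always legitimate.
    obtain ⟨τ, hτ, hτω⟩ := F.r_surjOn (Set.subset_univ Φ) hω
    have hPiτ := hPiS hτ (Set.subset_univ Φ)
    rw [hτω] at hPiτ
    by_contra hne
    have hmem : F.r Set.univ (al i ω) τ ∈ PiS i ω :=
      hPiτ ▸ Set.mem_image_of_mem _ (hLa.refl τ)
    exact Set.disjoint_left.mp (F.S_disjoint hne)
      (F.r_mem (Set.subset_univ _) hτ) (hPi hmem)
  have hPiω : PiS i ω = F.r Φ Ψ '' La i ω := by
    have h := hPiS hω subset_rfl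
    rwa [F.r_id Φ ω hω, hal] at h
  rw [hPiω, hPiS hω (hΥΨ.trans hΨΦ), hII hω (hal ▸ hΥΨ) (hΥΨ.trans hΨΦ), Set.image_image]
  exact Set.image_congr fun x hx => F.r_comp hΥΨ hΨΦ x ((hLa.projImplicit hω).1 hx)
end

section
/- In any implicit knowledge-based HMS model, for every individual i ∈ I, the pair (Λ*_i, Π*_i) jointly satisfies Explicit Measurability and Implicit Measurability: for all ω, ω' ∈ Ω, (a) ω' ∈ Λ*_i(ω) implies Π*_i(ω') = Π*_i(ω), and (b) ω' ∈ Π*_i(ω) implies Λ*_i(ω') = (Λ*_i(ω))_{S_{Π*_i(ω)}}, where S_{Π*_i(ω)} is the space containing Π*_i(ω). -/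
variable {At Ω : Type*}

/-- In any implicit knowledge-based HMS model, for every individual
`i ∈ I`, the pair `(Λ*_i, Π*_i)` jointly satisfies Explicit Measurability and
Implicit Measurability: (a) `ω' ∈ Λ*_i(ω)` implies `Π*_i(ω') = Π*_i(ω)`, and
(b) `ω' ∈ Π*_i(ω)` implies `Λ*_i(ω') = (Λ*_i(ω))_{S_{Π*_i(ω)}}`. -/
theorem derived_pi_measurability
    {At Ω I : Type*} [Nonempty At] [Nonempty I]
    (M : ImpHMSModel At Ω I) (i : I) (PiS : Ω → Set Ω)
    (hPiS : DerivedPi M.toHMSFrame (M.LaS i) (M.al i) PiS) :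
    (∀ ⦃ω ω' : Ω⦄, ω' ∈ M.LaS i ω → PiS ω' = PiS ω) ∧
    (∀ ⦃Φ Ψ : Set At⦄ ⦃ω ω' : Ω⦄, ω ∈ M.S Φ → PiS ω ⊆ M.S Ψ → ω' ∈ PiS ω →
      M.LaS i ω' = M.r Φ Ψ '' M.LaS i ω) := by
  -- Projecting `ω ∈ S Φ` onto its own space shows that `Π*(ω)` is `Λ*(ω)` projected to `α(ω)`.
  have hPi : ∀ {Φ : Set At} {ω : Ω}, ω ∈ M.S Φ →
      PiS ω = M.r Φ (M.al i ω) '' M.LaS i ω := by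
    intro Φ ω hω
    have h := hPiS hω (subset_refl Φ)
    rwa [M.r_id Φ ω hω] at h
  have hLa := M.LaS_impl i
  refine ⟨?_, ?_⟩
  · intro ω ω' h
    obtain ⟨Φ, hω⟩ := M.S_cover ω
    rw [hPi hω, hPi ((hLa.projImplicit hω).1 h), M.al_I i h, hLa.stationarity h]
  · intro Φ Ψ ω ω' hω hsub h
    have hal : M.al i ω ⊆ Φ := M.al_O i hω
    have hproj := (hLa.projImplicit hω).2 hal
    have hmem : ω' ∈ M.LaS i (M.r Φ (M.al i ω) ω) := by
      rw [← hproj, ← hPi hω]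
      exact h
    have hα : ω' ∈ M.S (M.al i ω) := (hLa.projImplicit (M.r_mem hal hω)).1 hmem
    -- `ω'` lies in both `S Ψ` and `S (α(ω))`, and distinct spaces are disjoint.
    have hΨ : Ψ = M.al i ω := by
      by_contra hne
      exact Set.disjoint_left.mp (M.S_disjoint hne) (hsub h) hα
    rw [hΨ, hproj]
    exact hLa.stationarity hmem
end
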